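/- Let G be a finite simple cubic graph containing the graph K as a subgraph, i.e., there exist five pairwise distinct vertices v1, v2, v3, v4, v5 of G such that v1v2, v1v3, v2v4, v2v5, v3v4, v3v5, v4v5 are all edges of G. Then G admits no normal edge-coloring with at most 6 colors; that is, χ'_N(G) ≥ 7. -/

import Mathlib

open SimpleGraph

/-- A proper edge-coloring: distinct edges of `G` sharing an endpoint get different colors. -/
def IsProperEdgeColoring {V C : Type*} (G : SimpleGraph V) (c : Sym2 V → C) : Prop :=
  ∀ e ∈ G.edgeSet, ∀ f ∈ G.edgeSet, e ≠ f → (∃ v : V, v ∈ e ∧ v ∈ f) → c e ≠ c f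

/-- `S_c(v)`: the set of colors appearing on edges incident to `v`. -/
def colorSet {V C : Type*} (G : SimpleGraph V) (c : Sym2 V → C) (v : V) : Set C :=
  c '' G.incidenceSet v

/-- The edge `uv` is poor: exactly 3 colors appear around its endpoints. -/
def IsPoorAt {V C : Type*} (G : SimpleGraph V) (c : Sym2 V → C) (u v : V) : Prop :=
  (colorSet G c u ∪ colorSet G c v).ncard = 3

/-- The edge `uv` is rich: exactly 5 colors appear around its endpoints. -/
def IsRichAt {V C : Type*} (G : SimpleGraph V) (c : Sym2 V → C) (u v : V) : Prop :=
  (colorSet G c u ∪ colorSet G c v).ncard = 5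

/-- A normal edge-coloring: a proper edge-coloring in which every edge is poor or rich. -/
def IsNormalEdgeColoring {V C : Type*} (G : SimpleGraph V) (c : Sym2 V → C) : Prop :=
  IsProperEdgeColoring G c ∧
    ∀ u v : V, G.Adj u v → IsPoorAt G c u v ∨ IsRichAt G c u v

/-- A nowhere-zero flow with values in an additive group `M` (all elements self-inverse in our
applications): nonzero on every edge, and at every vertex the values on incident edges sum to 0. -/
def IsNowhereZeroFlow {V M : Type*} [AddCommMonoid M] (G : SimpleGraph V)
    (θ : Sym2 V → M) : Prop :=
  (∀ e ∈ G.edgeSet, θ e ≠ 0) ∧ ∀ v : V, ∑ᶠ e ∈ G.incidenceSet v, θ e = 0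

/-- `G` is `k`-edge-connected: connected, and still connected after deleting any set of
fewer than `k` edges. -/
def EdgeConnGe {V : Type*} (G : SimpleGraph V) (k : ℕ) : Prop :=
  G.Connected ∧ ∀ s : Set (Sym2 V), s.ncard < k → (G.deleteEdges s).Connected

/-- `G` is cubic: every vertex has degree 3. -/
def IsCubic {V : Type*} (G : SimpleGraph V) : Prop :=
  ∀ v : V, (G.neighborSet v).ncard = 3

/-- `G` is bridgeless: no edge is a bridge. -/
def Bridgeless {V : Type*} (G : SimpleGraph V) : Prop :=
  ∀ e ∈ G.edgeSet, ¬ G.IsBridge e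

theorem aux_colorSet {V C : Type*} [Fintype V] (G : SimpleGraph V) (hG : IsCubic G)
    (c : Sym2 V → C) (v x y z : V) (hx : G.Adj v x) (hy : G.Adj v y) (hz : G.Adj v z)
    (hxy : x ≠ y) (hxz : x ≠ z) (hyz : y ≠ z) :
    colorSet G c v = {c s(v, x), c s(v, y), c s(v, z)} := by
  have hN : ({x, y, z} : Set V) = G.neighborSet v := by
    apply Set.eq_of_subset_of_ncard_le
    · rintro w (rfl | rfl | rfl) <;> assumption
    · rw [hG v, Set.ncard_eq_three.2 ⟨x, y, z, hxy, hxz, hyz, rfl⟩]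
    · exact Set.toFinite _
  ext k
  constructor
  · rintro ⟨e, ⟨he, hve⟩, rfl⟩
    obtain ⟨w, rfl⟩ := hve
    have : w ∈ ({x, y, z} : Set V) := by rw [hN]; exact he
    rcases this with rfl | rfl | rfl <;> simp
  · rintro (rfl | rfl | rfl)
    · exact ⟨_, ⟨hx, by simp⟩, rfl⟩
    · exact ⟨_, ⟨hy, by simp⟩, rfl⟩
    · exact ⟨_, ⟨hz, by simp⟩, rfl⟩

theorem aux_four {C : Type*} (p q r t : C) (h1 : p ≠ q) (h2 : p ≠ r) (h3 : p ≠ t)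
    (h4 : q ≠ r) (h5 : q ≠ t) (h6 : r ≠ t) (S : Set C)
    (hS : S = {p, q, r, t}) (h : S.ncard = 3 ∨ S.ncard = 5) : False := by
  classical
  have : S = (({p, q, r, t} : Finset C) : Set C) := by simp [hS]
  rw [this, Set.ncard_coe_finset] at h
  have h' : ({p, q, r, t} : Finset C).card = 4 := by
    simp [*]
  omega

theorem aux_edge {C : Type*} (p q r s t : C) (hpq : p ≠ q) (hpr : p ≠ r) (hqr : q ≠ r)
    (hps : p ≠ s) (hpt : p ≠ t) (hst : s ≠ t) (A B : Set C)
    (hA : A = {p, q, r}) (hB : B = {p, s, t})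
    (h : (A ∪ B).ncard = 3 ∨ (A ∪ B).ncard = 5) :
    (q = s ∧ r = t) ∨ (q = t ∧ r = s) ∨ (q ≠ s ∧ q ≠ t ∧ r ≠ s ∧ r ≠ t) := by
  by_contra hc
  by_cases a1 : q = s
  · exact aux_four p q r t hpq hpr hpt hqr (by grind) (by grind) _
      (by subst hA hB; ext; simp; grind) h
  by_cases a2 : q = t
  · exact aux_four p q r s hpq hpr hps hqr (by grind) (by grind) _
      (by subst hA hB; ext; simp; grind) h
  by_cases a3 : r = s
  · exact aux_four p q r t hpq hpr hpt hqr (by grind) (by grind) _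
      (by subst hA hB; ext; simp; grind) h
  by_cases a4 : r = t
  · exact aux_four p q r s hpq hpr hps hqr (by grind) (by grind) _
      (by subst hA hB; ext; simp; grind) h
  exact hc (Or.inr (Or.inr ⟨a1, a2, a3, a4⟩))

theorem aux_proper {V C : Type*} (G : SimpleGraph V) (c : Sym2 V → C)
    (h : IsProperEdgeColoring G c) (v x y : V) (hx : G.Adj v x) (hy : G.Adj v y)
    (hxy : x ≠ y) : c s(v, x) ≠ c s(v, y) := by
  refine h _ hx _ hy ?_ ⟨v, by simp, by simp⟩
  intro he
  simp at he
  grind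

theorem aux_fin (a b d e f g h : Fin 6) (hab : a ≠ b)
    (had : a ≠ d) (hae : a ≠ e) (hde : d ≠ e)
    (hbf : b ≠ f) (hbg : b ≠ g) (hfg : f ≠ g)
    (hdf : d ≠ f) (hdh : d ≠ h) (hfh : f ≠ h)
    (heg : e ≠ g) (heh : e ≠ h) (hgh : g ≠ h)
    (e24 : (a = f ∧ e = h) ∨ (a = h ∧ e = f) ∨ (a ≠ f ∧ a ≠ h ∧ e ≠ f ∧ e ≠ h))
    (e25 : (a = g ∧ d = h) ∨ (a = h ∧ d = g) ∨ (a ≠ g ∧ a ≠ h ∧ d ≠ g ∧ d ≠ h))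
    (e34 : (b = d ∧ g = h) ∨ (b = h ∧ g = d) ∨ (b ≠ d ∧ b ≠ h ∧ g ≠ d ∧ g ≠ h))
    (e35 : (b = e ∧ f = h) ∨ (b = h ∧ f = e) ∨ (b ≠ e ∧ b ≠ h ∧ f ≠ e ∧ f ≠ h))
    (e45 : (d = e ∧ f = g) ∨ (d = g ∧ f = e) ∨ (d ≠ e ∧ d ≠ g ∧ f ≠ e ∧ f ≠ g)) :
    False := by
  rcases e45 with e45 | e45 | ⟨-, k1, k2, -⟩
  · exact hde e45.1
  · grind
  · have q1 : a ≠ f ∧ a ≠ h := by grind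
    have q2 : a ≠ g := by grind
    have q3 : b ≠ d ∧ b ≠ h := by grind
    have q4 : b ≠ e := by grind
    clear e24 e25 e34 e35
    have hn : ({a, b, d, e, f, g, h} : Finset (Fin 6)).card = 7 := by
      have := q1.1; have := q1.2; have := q3.1; have := q3.2
      have := k2.symm
      simp [*]
    have := Finset.card_le_univ ({a, b, d, e, f, g, h} : Finset (Fin 6))
    simp only [Fintype.card_fin] at this
    omega

theorem stmt_6 {V : Type*} [Fintype V] (G : SimpleGraph V) (hG : IsCubic G)
    (v₁ v₂ v₃ v₄ v₅ : V) (hdist : ([v₁, v₂, v₃, v₄, v₅] : List V).Nodup)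
    (h12 : G.Adj v₁ v₂) (h13 : G.Adj v₁ v₃) (h24 : G.Adj v₂ v₄) (h25 : G.Adj v₂ v₅)
    (h34 : G.Adj v₃ v₄) (h35 : G.Adj v₃ v₅) (h45 : G.Adj v₄ v₅) :
    ∀ c : Sym2 V → Fin 6, ¬ IsNormalEdgeColoring G c := by
  rintro c ⟨hp, hn⟩
  simp only [List.nodup_cons, List.mem_cons, List.not_mem_nil, or_false, not_or,
    List.nodup_nil, not_false_eq_true, and_true] at hdist
  obtain ⟨⟨n12, n13, n14, n15⟩, ⟨n23, n24, n25⟩, ⟨n34, n35⟩, n45⟩ := hdist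
  have S2 := aux_colorSet G hG c v₂ v₁ v₄ v₅ h12.symm h24 h25 n14 n15 n45
  have S3 := aux_colorSet G hG c v₃ v₁ v₄ v₅ h13.symm h34 h35 n14 n15 n45
  have S4 := aux_colorSet G hG c v₄ v₂ v₃ v₅ h24.symm h34.symm h45 n23 n25 n35
  have S5 := aux_colorSet G hG c v₅ v₂ v₃ v₄ h25.symm h35.symm h45.symm n23 n24 n34
  have p1 := aux_proper G c hp v₁ v₂ v₃ h12 h13 n23
  have p2 := aux_proper G c hp v₂ v₁ v₄ h12.symm h24 n14
  have p3 := aux_proper G c hp v₂ v₁ v₅ h12.symm h25 n15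
  have p4 := aux_proper G c hp v₂ v₄ v₅ h24 h25 n45
  have p5 := aux_proper G c hp v₃ v₁ v₄ h13.symm h34 n14
  have p6 := aux_proper G c hp v₃ v₁ v₅ h13.symm h35 n15
  have p7 := aux_proper G c hp v₃ v₄ v₅ h34 h35 n45
  have p8 := aux_proper G c hp v₄ v₂ v₃ h24.symm h34.symm n23
  have p9 := aux_proper G c hp v₄ v₂ v₅ h24.symm h45 n25
  have p10 := aux_proper G c hp v₄ v₃ v₅ h34.symm h45 n35
  have p11 := aux_proper G c hp v₅ v₂ v₃ h25.symm h35.symm n23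
  have p12 := aux_proper G c hp v₅ v₂ v₄ h25.symm h45.symm n24
  have p13 := aux_proper G c hp v₅ v₃ v₄ h35.symm h45.symm n34
  rw [Sym2.eq_swap (a := v₂) (b := v₁)] at *
  rw [Sym2.eq_swap (a := v₃) (b := v₁)] at *
  rw [Sym2.eq_swap (a := v₄) (b := v₂), Sym2.eq_swap (a := v₄) (b := v₃)] at S4
  rw [Sym2.eq_swap (a := v₅) (b := v₂), Sym2.eq_swap (a := v₅) (b := v₃),
    Sym2.eq_swap (a := v₅) (b := v₄)] at S5
  rw [Sym2.eq_swap (a := v₄) (b := v₂)] at p8 p9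
  rw [Sym2.eq_swap (a := v₄) (b := v₃)] at p8 p10
  rw [Sym2.eq_swap (a := v₅) (b := v₂)] at p11 p12
  rw [Sym2.eq_swap (a := v₅) (b := v₃)] at p11 p13
  rw [Sym2.eq_swap (a := v₅) (b := v₄)] at p12 p13
  have q24 := hn _ _ h24
  have q25 := hn _ _ h25
  have q34 := hn _ _ h34
  have q35 := hn _ _ h35
  have q45 := hn _ _ h45
  unfold IsPoorAt IsRichAt at q24 q25 q34 q35 q45
  generalize c s(v₁, v₂) = a at *
  generalize c s(v₁, v₃) = b at *
  generalize c s(v₂, v₄) = d at *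
  generalize c s(v₂, v₅) = e at *
  generalize c s(v₃, v₄) = f at *
  generalize c s(v₃, v₅) = g at *
  generalize c s(v₄, v₅) = h at *
  refine aux_fin a b d e f g h p1 p2 p3 p4 p5 p6 p7 p8 p9 p10 p11 p12 p13 ?_ ?_ ?_ ?_ ?_
  · exact aux_edge d a e f h p2.symm p4 p3 p8 p9 p10 _ _
      (by rw [S2]; ext; simp; grind) (by rw [S4]) q24
  · exact aux_edge e a d g h p3.symm p4.symm p2 p11 p12 p13 _ _
      (by rw [S2]; ext; simp; grind) (by rw [S5]) q25
  · exact aux_edge f b g d h p5.symm p7 p6 p8.symm p10 p9 _ _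
      (by rw [S3]; ext; simp; grind) (by rw [S4]; ext; simp; grind) q34
  · exact aux_edge g b f e h p6.symm p7.symm p5 p11.symm p13 p12 _ _
      (by rw [S3]; ext; simp; grind) (by rw [S5]; ext; simp; grind) q35
  · exact aux_edge h d f e g p9.symm p10.symm p8 p12.symm p13.symm p11 _ _
      (by rw [S4]; ext; simp; grind) (by rw [S5]; ext; simp; grind) q45
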